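/- Let k be a field of characteristic zero, W a k-vector space, and m ≥ 1. Then the subspace of symmetric tensors in W^{⊗m} (elements fixed by the permutation action of S_m on tensor factors) equals the k-linear span of the set {w^{⊗m} : w ∈ W}. -/

import Mathlib

/- STATEMENT 19: Over a field of characteristic zero, the symmetric tensors in `W^{⊗m}`
(fixed points of the permutation action of `S_m`) are exactly the span of the powers
`w^{⊗m}`, `w ∈ W`. -/

open TensorProduct PiTensorProduct

noncomputable section

variable (k : Type*) [Field k] (W : Type*) [AddCommGroup W] [Module k W]

/-- The permutation action of `σ ∈ S_m` on `W^{⊗m}`, sending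
`w₁ ⊗ ⋯ ⊗ w_m` to `w_{σ⁻¹(1)} ⊗ ⋯ ⊗ w_{σ⁻¹(m)}`. -/
def permOp (m : ℕ) (σ : Equiv.Perm (Fin m)) : Module.End k (⨂[k]^m W) :=
  (PiTensorProduct.reindex k (fun _ : Fin m => W) σ).toLinearMap

/-! Expanding `f (∑ i ∈ s, v i, …, ∑ i ∈ s, v i)` for a multilinear `f`, and taking the alternating
sum over all index subsets `s`, cancels every term except those in which each `v i` occurs exactly
once. Applied to the universal multilinear map `tprod`, this exhibits the sum of all permutations of
a pure tensor as a combination of powers. On a symmetric tensor that sum is multiplication by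
`m!`, which can be divided out. -/

section Polarization

open Finset

theorem sum_superset_neg_one_pow_card_compl {κ : Type*} [Fintype κ] [DecidableEq κ]
    (a : Finset κ) :
    ∑ s : Finset κ with a ⊆ s, (-1 : ℤ) ^ #sᶜ = if a = univ then 1 else 0 := calc
  _ = ∑ t ∈ aᶜ.powerset, (-1 : ℤ) ^ #t :=
    sum_nbij' compl compl (by simp) (by simp [subset_compl_comm]) (by simp) (by simp) (by simp)
  _ = if a = univ then 1 else 0 := by
    simp only [sum_powerset_neg_one_pow_card, compl_eq_empty_iff]

theorem sum_filter_surjective_eq_sum_perm {ι N : Type*} [Fintype ι] [DecidableEq ι]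
    [AddCommMonoid N] (F : (ι → ι) → N) :
    ∑ r : ι → ι with Function.Surjective r, F r = ∑ σ : Equiv.Perm ι, F σ := by
  symm
  refine sum_nbij (⇑) (fun σ _ => by simpa using σ.surjective)
    DFunLike.coe_injective.injOn (fun r hr => ?_) fun _ _ => rfl
  have r_bijective := Finite.surjective_iff_bijective.mp (mem_filter.mp hr).2
  exact ⟨Equiv.ofBijective r r_bijective, by simp⟩

variable {R ι κ N : Type*} [Semiring R] [AddCommGroup N] [Module R N]
  [Fintype ι] [DecidableEq ι]

theorem multilinearMap_sum_neg_one_pow_smul_eq_sum_surjective [Fintype κ] [DecidableEq κ]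
    {M : ι → Type*} [∀ i, AddCommMonoid (M i)] [∀ i, Module R (M i)]
    (f : MultilinearMap R M N) (v : ∀ i, κ → M i) :
    ∑ s : Finset κ, (-1 : ℤ) ^ #sᶜ • f (fun i => ∑ j ∈ s, v i j) =
      ∑ r : ι → κ with Function.Surjective r, f fun i => v i (r i) := calc
  _ = ∑ s : Finset κ, ∑ r ∈ Fintype.piFinset fun _ : ι => s,
        (-1 : ℤ) ^ #sᶜ • f fun i => v i (r i) := by
    simp only [f.map_sum_finset, smul_sum]
  _ = ∑ r : ι → κ, ∑ s : Finset κ with univ.image r ⊆ s,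
        (-1 : ℤ) ^ #sᶜ • f fun i => v i (r i) :=
    sum_comm' fun s r => by simp [image_subset_iff]
  _ = ∑ r : ι → κ, if univ.image r = univ then f fun i => v i (r i) else 0 := by
    simp only [← sum_smul, sum_superset_neg_one_pow_card_compl, ite_smul, one_smul, zero_smul]
  _ = ∑ r : ι → κ with Function.Surjective r, f fun i => v i (r i) := by
    simp only [← Set.range_eq_univ, ← coe_eq_univ, coe_image, coe_univ, Set.image_univ,
      sum_filter]

theorem multilinearMap_polarization {M : Type*} [AddCommMonoid M] [Module R M]
    (f : MultilinearMap R (fun _ : ι => M) N) (v : ι → M) :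
    ∑ s : Finset ι, (-1 : ℤ) ^ #sᶜ • f (fun _ => ∑ j ∈ s, v j) =
      ∑ σ : Equiv.Perm ι, f fun i => v (σ i) :=
  (multilinearMap_sum_neg_one_pow_smul_eq_sum_surjective f fun _ => v).trans
    (sum_filter_surjective_eq_sum_perm fun r => f fun i => v (r i))

end Polarization

section SymmetricTensors

variable (R ι M : Type*) [CommRing R] [AddCommGroup M] [Module R M]

/-- The submodule of symmetric tensors in `⨂[R] _ : ι, M`: those fixed by every permutation of
the tensor factors. -/
def symmetricTensors : Submodule R (⨂[R] _ : ι, M) :=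
  ⨅ σ : Equiv.Perm ι, (reindex R (fun _ : ι => M) σ).toLinearMap.eqLocus LinearMap.id

/-- The unnormalised symmetrizer of `⨂[R] _ : ι, M`, that is, the sum of all permutations of the
tensor factors. It is not divided by `(Fintype.card ι)!`, so that it exists over every ring. -/
def symmetrizer [Fintype ι] [DecidableEq ι] : Module.End R (⨂[R] _ : ι, M) :=
  ∑ σ : Equiv.Perm ι, (reindex R (fun _ : ι => M) σ).toLinearMap

variable {R ι M}

theorem mem_symmetricTensors {x : ⨂[R] _ : ι, M} :
    x ∈ symmetricTensors R ι M ↔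
      ∀ σ : Equiv.Perm ι, reindex R (fun _ : ι => M) σ x = x := by
  simp only [symmetricTensors, Submodule.mem_iInf, LinearMap.mem_eqLocus, LinearEquiv.coe_coe,
    LinearMap.id_apply]

theorem tprod_const_mem_symmetricTensors (w : M) :
    tprod R (fun _ : ι => w) ∈ symmetricTensors R ι M :=
  mem_symmetricTensors.mpr fun σ => reindex_tprod σ _

variable [Fintype ι]

theorem symmetrizer_apply_of_mem_symmetricTensors [DecidableEq ι] {x : ⨂[R] _ : ι, M}
    (hx : x ∈ symmetricTensors R ι M) :
    symmetrizer R ι M x = ((Fintype.card ι).factorial : R) • x := by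
  simp only [symmetrizer, LinearMap.sum_apply, LinearEquiv.coe_coe, mem_symmetricTensors.mp hx,
    Finset.sum_const, Finset.card_univ, Fintype.card_perm, Nat.cast_smul_eq_nsmul]

theorem symmetrizer_tprod [DecidableEq ι] (v : ι → M) :
    symmetrizer R ι M (tprod R v) = ∑ σ : Equiv.Perm ι, tprod R fun i => v (σ i) := by
  simp only [symmetrizer, LinearMap.sum_apply, LinearEquiv.coe_coe, reindex_tprod]
  exact Fintype.sum_equiv (Equiv.inv _) _ _ fun _ => rfl

theorem range_symmetrizer_le_span_tprod_const [DecidableEq ι] :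
    LinearMap.range (symmetrizer R ι M) ≤
      Submodule.span R {t | ∃ w : M, t = tprod R fun _ : ι => w} := by
  rw [LinearMap.range_eq_map, ← span_tprod_eq_top, Submodule.map_span_le]
  rintro _ ⟨v, rfl⟩
  rw [symmetrizer_tprod, ← multilinearMap_polarization]
  refine Submodule.sum_mem _ fun s _ => zsmul_mem (Submodule.subset_span ?_) _
  exact ⟨∑ j ∈ s, v j, rfl⟩

theorem stmt_19_general (card_factorial_isUnit : IsUnit ((Fintype.card ι).factorial : R)) :
    symmetricTensors R ι M =
      Submodule.span R {t | ∃ w : M, t = tprod R fun _ : ι => w} := by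
  classical
  apply le_antisymm
  · intro x hx
    rw [← Submodule.smul_mem_iff_of_isUnit _ card_factorial_isUnit,
      ← symmetrizer_apply_of_mem_symmetricTensors hx]
    exact range_symmetrizer_le_span_tprod_const (LinearMap.mem_range_self _ x)
  · rw [Submodule.span_le]
    rintro _ ⟨w, rfl⟩
    exact tprod_const_mem_symmetricTensors w

end SymmetricTensors

theorem stmt_19 (k : Type*) [Field k] [CharZero k]
    (W : Type*) [AddCommGroup W] [Module k W] (m : ℕ) (hm : 1 ≤ m)
    (x : ⨂[k]^m W) :
    (∀ σ : Equiv.Perm (Fin m), permOp k W m σ x = x) ↔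
      x ∈ Submodule.span k {t : ⨂[k]^m W | ∃ w : W, t = tprod k (fun _ : Fin m => w)} := by
  rw [← stmt_19_general (Nat.cast_ne_zero.mpr (Nat.factorial_ne_zero _)).isUnit]
  exact mem_symmetricTensors.symm

end
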